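/- There exists a constant C depending only on m and δ such that for every measurable Z : ℝ² → ℂ: ‖⟨k⟩^m·A(k)·|k|^{1/2}·|η − kt|^{1/2}·p^{−1/4}·Z‖_{L²_k L¹_η} ≤ C·( D_{τα}^{1/4}·E^{1/2} + μ^{−δ}·D_γ^{δ}·D_{τα}^{1/4}·E^{1/2−2δ} ). -/

import Mathlib

open MeasureTheory Real
open scoped ENNReal NNReal

noncomputable section

/-- The Japanese bracket `⟨k⟩ = (1+k²)^{1/2}`. -/
def jap (k : ℝ) : ℝ := Real.sqrt (1 + k ^ 2)

/-- The moving-frame symbol `p(k,η) = k² + (η − kt)²`. -/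
def pw (t k η : ℝ) : ℝ := k ^ 2 + (η - k * t) ^ 2

/-- The weight `A(k)`. -/
def Aw (μ k : ℝ) : ℝ :=
  if |k| < μ then 1 else μ ^ ((1 : ℝ) / 3) * |k| ^ (-(1 : ℝ) / 3)

/-- The weight `B(k)`. -/
def Bw (μ k : ℝ) : ℝ :=
  if |k| < μ then μ ^ (-(1 : ℝ) / 2) else μ ^ ((1 : ℝ) / 6) * |k| ^ (-(2 : ℝ) / 3)

/-- Weighted `L¹(ℝ²)` norm `‖w·Z‖_{L¹}` (iterated, value in `[0,∞]`). -/
def L1n (w : ℝ → ℝ → ℝ) (Z : ℝ × ℝ → ℂ) : ℝ≥0∞ :=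
  ∫⁻ k : ℝ, ∫⁻ η : ℝ, ENNReal.ofReal (w k η) * (‖Z (k, η)‖₊ : ℝ≥0∞)

/-- Weighted `L²(ℝ²)` norm `‖w·Z‖_{L²}` (value in `[0,∞]`). -/
def L2n (w : ℝ → ℝ → ℝ) (Z : ℝ × ℝ → ℂ) : ℝ≥0∞ :=
  (∫⁻ k : ℝ, ∫⁻ η : ℝ,
      (ENNReal.ofReal (w k η) * (‖Z (k, η)‖₊ : ℝ≥0∞)) ^ 2) ^ ((1 : ℝ) / 2)

/-- Weighted mixed norm `‖w·Z‖_{L²_k L¹_η}` (value in `[0,∞]`). -/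
def L2L1n (w : ℝ → ℝ → ℝ) (Z : ℝ × ℝ → ℂ) : ℝ≥0∞ :=
  (∫⁻ k : ℝ,
      (∫⁻ η : ℝ, ENNReal.ofReal (w k η) * (‖Z (k, η)‖₊ : ℝ≥0∞)) ^ 2) ^ ((1 : ℝ) / 2)

/-- The energy `E = ‖⟨k⟩^m Z‖_{L²} + ‖⟨k⟩^m A(k)(η−kt) Z‖_{L²}`. -/
def En (t μ m : ℝ) (Z : ℝ × ℝ → ℂ) : ℝ≥0∞ :=
  L2n (fun k _ => jap k ^ m) Z + L2n (fun k η => jap k ^ m * Aw μ k * |η - k * t|) Z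

/-- The dissipation `D_γ = μ·∬ ⟨k⟩^{2m} p |Z|²`. -/
def Dg (t μ m : ℝ) (Z : ℝ × ℝ → ℂ) : ℝ≥0∞ :=
  ENNReal.ofReal μ * ∫⁻ k : ℝ, ∫⁻ η : ℝ,
    ENNReal.ofReal (jap k ^ (2 * m) * pw t k η) * (‖Z (k, η)‖₊ : ℝ≥0∞) ^ 2

/-- The dissipation `D_τ = ∬ ⟨k⟩^{2m} k² p⁻¹ |Z|²`. -/
def Dtau (t m : ℝ) (Z : ℝ × ℝ → ℂ) : ℝ≥0∞ :=
  ∫⁻ k : ℝ, ∫⁻ η : ℝ,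
    ENNReal.ofReal (jap k ^ (2 * m) * k ^ 2 / pw t k η) * (‖Z (k, η)‖₊ : ℝ≥0∞) ^ 2

/-- The dissipation `D_α = μ·∬ ⟨k⟩^{2m} A(k)² (η−kt)² p |Z|²`. -/
def Dal (t μ m : ℝ) (Z : ℝ × ℝ → ℂ) : ℝ≥0∞ :=
  ENNReal.ofReal μ * ∫⁻ k : ℝ, ∫⁻ η : ℝ,
    ENNReal.ofReal (jap k ^ (2 * m) * Aw μ k ^ 2 * (η - k * t) ^ 2 * pw t k η)
      * (‖Z (k, η)‖₊ : ℝ≥0∞) ^ 2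

/-- The dissipation `D_{τα} = ∬ ⟨k⟩^{2m} A(k)² k² (η−kt)² p⁻¹ |Z|²`. -/
def Dta (t μ m : ℝ) (Z : ℝ × ℝ → ℂ) : ℝ≥0∞ :=
  ∫⁻ k : ℝ, ∫⁻ η : ℝ,
    ENNReal.ofReal (jap k ^ (2 * m) * Aw μ k ^ 2 * k ^ 2 * (η - k * t) ^ 2 / pw t k η)
      * (‖Z (k, η)‖₊ : ℝ≥0∞) ^ 2

/-- The dissipation `D_β = ∬ ⟨k⟩^{2m} B(k)² k² |Z|²`. -/
def Db (t μ m : ℝ) (Z : ℝ × ℝ → ℂ) : ℝ≥0∞ :=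
  ∫⁻ k : ℝ, ∫⁻ η : ℝ,
    ENNReal.ofReal (jap k ^ (2 * m) * Bw μ k ^ 2 * k ^ 2) * (‖Z (k, η)‖₊ : ℝ≥0∞) ^ 2

/-!
Write `v = η - kt` and `ρ = |k||v| / √(k² + v²)`. Up to the weight `⟨k⟩ᵐ A(k)`, the left-hand side
is the `L²_k L¹_η` norm of `ρ^{1/2} Z`, while `D_{τα}` is the squared `L²` norm of `ρ Z`, `E`
dominates the `L²` norm of `v Z`, and `μ⁻¹ D_γ` the squared `L²` norm of `k Z` because `A ≤ 1`.

Fix `k` and put `θ = 2δ`. On `|v| < |k|`, the identity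
`ρ |Z|² = |v|^{2θ-1} |k|^{-2θ} · |ρZ| |vZ|^{1-2θ} |kZ|^{2θ}` and Cauchy–Schwarz reduce the bound to
Hölder's inequality: the singular kernel has mass `1/θ`, and spending the power `θ` on `D_γ` is what
makes it integrable at `v = 0`. On `|v| ≥ |k|`, where `ρ` is comparable to `|k|`, Carlson's
inequality `‖f‖₁² ≲ ‖f‖₂ ‖vf‖₂` for `f = |k|^{1/2} Z` suffices. Hölder's inequality in `k`
concludes.
-/

lemma le_two_mul_rpow_half_of_forall_le {x a b : ℝ≥0∞} (ha : a ≠ 0) (hb : b ≠ 0)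
    (h : ∀ l : ℝ≥0, l ≠ 0 → x ≤ l * a + (l : ℝ≥0∞)⁻¹ * b) :
    x ≤ 2 * (a ^ (1 / 2 : ℝ) * b ^ (1 / 2 : ℝ)) := by
  have sq_root (y : ℝ≥0∞) : (y ^ (1 / 2 : ℝ)) ^ 2 = y := by
    rw [← ENNReal.rpow_mul_natCast]; norm_num
  have root_ne_zero {y : ℝ≥0∞} (hy : y ≠ 0) : y ^ (1 / 2 : ℝ) ≠ 0 := by simp [hy]
  rcases eq_or_ne a ∞ with rfl | ha'
  · simp [ENNReal.top_mul, hb]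
  rcases eq_or_ne b ∞ with rfl | hb'
  · simp [ENNReal.mul_top, ha]
  obtain ⟨α, hα⟩ : ∃ α : ℝ≥0, α = a ^ (1 / 2 : ℝ) := ⟨_, ENNReal.coe_toNNReal (by simp [ha'])⟩
  obtain ⟨β, hβ⟩ : ∃ β : ℝ≥0, β = b ^ (1 / 2 : ℝ) := ⟨_, ENNReal.coe_toNNReal (by simp [hb'])⟩
  have hα0 : α ≠ 0 := ENNReal.coe_ne_zero.1 (hα ▸ root_ne_zero ha)
  have hβ0 : β ≠ 0 := ENNReal.coe_ne_zero.1 (hβ ▸ root_ne_zero hb)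
  have hl : β / α ≠ 0 := div_ne_zero hβ0 hα0
  calc x ≤ ↑(β / α) * a + (↑(β / α))⁻¹ * b := h _ hl
    _ = ↑(β / α * α ^ 2 + (β / α)⁻¹ * β ^ 2) := by
        rw [← sq_root a, ← sq_root b, ← hα, ← hβ, ← ENNReal.coe_inv hl]; norm_cast
    _ = 2 * (a ^ (1 / 2 : ℝ) * b ^ (1 / 2 : ℝ)) := by
        rw [← hα, ← hβ, show β / α * α ^ 2 + (β / α)⁻¹ * β ^ 2 = 2 * (α * β) by field_simp; ring]
        norm_cast

section Holder

variable {α : Type*} [MeasurableSpace α] {ν : Measure α}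

lemma sq_lintegral_le_lintegral_mul_lintegral {u f g : α → ℝ≥0∞} (hf : AEMeasurable f ν)
    (hg : AEMeasurable g ν) (h : ∀ᵐ x ∂ν, u x ^ 2 ≤ f x * g x) :
    (∫⁻ x, u x ∂ν) ^ 2 ≤ (∫⁻ x, f x ∂ν) * ∫⁻ x, g x ∂ν := by
  have le_root : ∀ᵐ x ∂ν, u x ≤ f x ^ (1 / 2 : ℝ) * g x ^ (1 / 2 : ℝ) := by
    filter_upwards [h] with x hx
    rw [← ENNReal.mul_rpow_of_nonneg _ _ (by norm_num), one_div,
      ENNReal.le_rpow_inv_iff two_pos, ENNReal.rpow_two]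
    exact hx
  have holder := (lintegral_mono_ae le_root).trans
    (ENNReal.lintegral_mul_norm_pow_le hf hg (by norm_num) (by norm_num) (by norm_num))
  rwa [← ENNReal.mul_rpow_of_nonneg _ _ (by norm_num), one_div,
    ENNReal.le_rpow_inv_iff two_pos, ENNReal.rpow_two] at holder

lemma lintegral_mul_mul_rpow_le {f g h : α → ℝ≥0∞} (hf : AEMeasurable f ν)
    (hg : AEMeasurable g ν) (hh : AEMeasurable h ν) {p q r : ℝ} (hp : 0 ≤ p) (hq : 0 ≤ q)
    (hr : 0 ≤ r) (hpqr : p + q + r = 1) :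
    ∫⁻ x, f x ^ p * g x ^ q * h x ^ r ∂ν
      ≤ (∫⁻ x, f x ∂ν) ^ p * (∫⁻ x, g x ∂ν) ^ q * (∫⁻ x, h x ∂ν) ^ r := by
  have := ENNReal.lintegral_prod_norm_pow_le (μ := ν) Finset.univ (f := ![f, g, h])
    (p := ![p, q, r]) (by simp [Fin.forall_fin_succ, hf, hg, hh])
    (by simpa [Fin.sum_univ_three] using hpqr) (by simp [Fin.forall_fin_succ, hp, hq, hr])
  simpa [Fin.prod_univ_three] using this

end Holder

lemma lintegral_comp_abs {f : ℝ → ℝ≥0∞} : ∫⁻ x, f |x| = 2 * ∫⁻ x in Set.Ioi 0, f x := by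
  have pos_half : ∫⁻ x in Set.Ioi 0, f |x| = ∫⁻ x in Set.Ioi 0, f x :=
    setLIntegral_congr_fun measurableSet_Ioi fun x hx => by rw [abs_of_pos hx]
  have neg_half : ∫⁻ x in Set.Iic 0, f |x| = ∫⁻ x in Set.Ioi 0, f |x| := by
    rw [setLIntegral_congr Iio_ae_eq_Iic.symm, ← lintegral_indicator measurableSet_Iio,
      ← lintegral_indicator measurableSet_Ioi, ← lintegral_neg_eq_self]
    congr with x
    simp [Set.indicator]
  rw [← lintegral_add_compl _ measurableSet_Ioi, Set.compl_Ioi, neg_half, pos_half, two_mul]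

lemma setLIntegral_Ioo_rpow_sub_one {s : ℝ} (hs : 0 < s) {r : ℝ} (hr : 0 ≤ r) :
    ∫⁻ x in Set.Ioo 0 r, ENNReal.ofReal (x ^ (s - 1)) = ENNReal.ofReal (r ^ s / s) := by
  have hint : IntegrableOn (fun x : ℝ => x ^ (s - 1)) (Set.Ioc 0 r) :=
    (intervalIntegrable_iff_integrableOn_Ioc_of_le hr).1
      (intervalIntegral.intervalIntegrable_rpow' (by linarith))
  have hnonneg : 0 ≤ᵐ[volume.restrict (Set.Ioc 0 r)] fun x : ℝ => x ^ (s - 1) := by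
    filter_upwards [ae_restrict_mem measurableSet_Ioc] with x hx
    exact Real.rpow_nonneg hx.1.le _
  rw [setLIntegral_congr Ioo_ae_eq_Ioc, ← ofReal_integral_eq_lintegral_ofReal hint hnonneg,
    ← intervalIntegral.integral_of_le hr, integral_rpow (by left; linarith)]
  simp [hs.ne']

lemma setLIntegral_ball_abs_sub_rpow {s : ℝ} (hs : 0 < s) (c : ℝ) {r : ℝ} (hr : 0 ≤ r) :
    ∫⁻ x in Metric.ball c r, ENNReal.ofReal (|x - c| ^ (s - 1)) =
      ENNReal.ofReal (2 * r ^ s / s) := by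
  set f : ℝ → ℝ≥0∞ := (Set.Iio r).indicator fun x => ENNReal.ofReal (x ^ (s - 1))
  calc ∫⁻ x in Metric.ball c r, ENNReal.ofReal (|x - c| ^ (s - 1))
      = ∫⁻ x, f |x - c| := by
        rw [← lintegral_indicator Metric.isOpen_ball.measurableSet]
        simp only [f, Set.indicator, Metric.mem_ball, Real.dist_eq, Set.mem_Iio]
    _ = 2 * ∫⁻ x in Set.Ioi 0, f x := by
        rw [lintegral_sub_right_eq_self (fun x => f |x|), lintegral_comp_abs]
    _ = 2 * ENNReal.ofReal (r ^ s / s) := by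
        rw [setLIntegral_indicator measurableSet_Iio, Set.inter_comm, Set.Ioi_inter_Iio,
          setLIntegral_Ioo_rpow_sub_one hs hr]
    _ = ENNReal.ofReal (2 * r ^ s / s) := by
        rw [← ENNReal.ofReal_ofNat, ← ENNReal.ofReal_mul zero_le_two, mul_div_assoc]

lemma sq_setLIntegral_le_of_scale {u : ℝ → ℝ≥0∞} (hu : Measurable u) (s : Set ℝ) (c : ℝ)
    {l : ℝ≥0} (hl : l ≠ 0) :
    (∫⁻ x in s, u x) ^ 2 ≤ l * (ENNReal.ofReal π * ∫⁻ x in s, u x ^ 2) +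
      (l : ℝ≥0∞)⁻¹ * (ENNReal.ofReal π * ∫⁻ x in s, (‖x - c‖ₑ * u x) ^ 2) := by
  -- `P` is `u²` divided by `π` times the Cauchy density of scale `l` centred at `c`.
  set P : ℝ → ℝ≥0∞ := fun x => l * u x ^ 2 + (l : ℝ≥0∞)⁻¹ * (‖x - c‖ₑ * u x) ^ 2
  have factor (x : ℝ) :
      u x ^ 2 = ENNReal.ofReal π * ProbabilityTheory.cauchyPDF c l x * P x := by
    have hl' : (0 : ℝ) < l := by positivity
    have unit : π * (π⁻¹ * l * ((x - c) ^ 2 + l ^ 2)⁻¹) * (l + (l : ℝ)⁻¹ * (x - c) ^ 2) = 1 := by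
      field_simp
      ring
    have hP : P x = ENNReal.ofReal (l + (l : ℝ)⁻¹ * (x - c) ^ 2) * u x ^ 2 := by
      rw [ENNReal.ofReal_add (by positivity) (by positivity), ENNReal.ofReal_mul (by positivity),
        ENNReal.ofReal_inv_of_pos hl', ENNReal.ofReal_coe_nnreal, ← sq_abs (x - c),
        ENNReal.ofReal_pow (abs_nonneg _), ← Real.enorm_eq_ofReal_abs]
      ring
    rw [hP, ProbabilityTheory.cauchyPDF_def, ProbabilityTheory.cauchyPDFReal_def, ← mul_assoc,
      ← ENNReal.ofReal_mul (by positivity), ← ENNReal.ofReal_mul (by positivity), unit,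
      ENNReal.ofReal_one, one_mul]
  have mass : ∫⁻ x in s, ENNReal.ofReal π * ProbabilityTheory.cauchyPDF c l x
      ≤ ENNReal.ofReal π := by
    grw [setLIntegral_le_lintegral, lintegral_const_mul _ (by fun_prop),
      ProbabilityTheory.lintegral_cauchyPDF_eq_one _ hl, mul_one]
  calc (∫⁻ x in s, u x) ^ 2
      ≤ (∫⁻ x in s, ENNReal.ofReal π * ProbabilityTheory.cauchyPDF c l x) * ∫⁻ x in s, P x :=
        sq_lintegral_le_lintegral_mul_lintegral (by fun_prop) (by fun_prop)
          (.of_forall fun x => (factor x).le)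
    _ ≤ ENNReal.ofReal π * ∫⁻ x in s, P x := by gcongr
    _ = _ := by
        rw [lintegral_add_left (by fun_prop), lintegral_const_mul _ (by fun_prop),
          lintegral_const_mul _ (by fun_prop)]
        ring

theorem carlson_sq_setLIntegral_le {u : ℝ → ℝ≥0∞} (hu : Measurable u) (s : Set ℝ) (c : ℝ) :
    (∫⁻ x in s, u x) ^ 2 ≤ ENNReal.ofReal (2 * π) *
      ((∫⁻ x in s, u x ^ 2) ^ (1 / 2 : ℝ) *
        (∫⁻ x in s, (‖x - c‖ₑ * u x) ^ 2) ^ (1 / 2 : ℝ)) := by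
  have eq_zero (h : ∀ᵐ x ∂volume.restrict s, u x = 0) :
      (∫⁻ x in s, u x) ^ 2 = 0 := by
    rw [lintegral_congr_ae h]
    simp
  by_cases ha : ∫⁻ x in s, u x ^ 2 = 0
  · rw [lintegral_eq_zero_iff (by fun_prop)] at ha
    grw [eq_zero (by filter_upwards [ha] with x hx; simpa using hx)]
    exact zero_le
  by_cases hb : ∫⁻ x in s, (‖x - c‖ₑ * u x) ^ 2 = 0
  · rw [lintegral_eq_zero_iff (by fun_prop)] at hb
    rw [eq_zero]
    · exact zero_le
    · filter_upwards [hb, Measure.ae_ne _ c] with x hx hxc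
      simpa [sub_eq_zero, hxc] using hx
  have hπ : ENNReal.ofReal π ≠ 0 := by simp [Real.pi_pos]
  refine (le_two_mul_rpow_half_of_forall_le (mul_ne_zero hπ ha) (mul_ne_zero hπ hb)
    fun l hl => sq_setLIntegral_le_of_scale hu s c hl).trans_eq ?_
  have root_mul_root : ENNReal.ofReal π ^ (1 / 2 : ℝ) * ENNReal.ofReal π ^ (1 / 2 : ℝ)
      = ENNReal.ofReal π := by
    rw [← ENNReal.rpow_add_of_nonneg _ _ (by norm_num) (by norm_num)]
    norm_num
  rw [ENNReal.mul_rpow_of_nonneg _ _ (by norm_num), ENNReal.mul_rpow_of_nonneg _ _ (by norm_num),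
    mul_mul_mul_comm, root_mul_root, ENNReal.ofReal_mul zero_le_two, ENNReal.ofReal_ofNat,
    mul_assoc]

/-- The symbol `ρ = |k| |v| / √(k² + v²)`: with `v = η - kt`, the left-hand side of the theorem is
the mixed norm of `⟨k⟩ᵐ A ρ^{1/2} Z` and `D_{τα}` is the squared `L²` norm of `⟨k⟩ᵐ A ρ Z`. -/
def crossSymbol (k v : ℝ) : ℝ := |k| * |v| / √(k ^ 2 + v ^ 2)

lemma crossSymbol_nonneg (k v : ℝ) : 0 ≤ crossSymbol k v := by
  unfold crossSymbol
  positivity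

@[fun_prop]
lemma measurable_uncurry_crossSymbol : Measurable (Function.uncurry crossSymbol) := by
  unfold crossSymbol Function.uncurry
  fun_prop

lemma crossSymbol_sq (k v : ℝ) : crossSymbol k v ^ 2 = k ^ 2 * v ^ 2 / (k ^ 2 + v ^ 2) := by
  rw [crossSymbol, div_pow, mul_pow, sq_abs, sq_abs, Real.sq_sqrt (by positivity)]

lemma crossSymbol_le_abs_left (k v : ℝ) : crossSymbol k v ≤ |k| := by
  have hv : |v| ≤ √(k ^ 2 + v ^ 2) := Real.abs_le_sqrt (by nlinarith [sq_nonneg k])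
  exact div_le_of_le_mul₀ (Real.sqrt_nonneg _) (abs_nonneg k) (by gcongr)

lemma sq_le_two_mul_crossSymbol_sq {k v : ℝ} (h : |k| ≤ |v|) : k ^ 2 ≤ 2 * crossSymbol k v ^ 2 := by
  rcases eq_or_ne k 0 with rfl | hk
  · simp [crossSymbol]
  have hkv : k ^ 2 ≤ v ^ 2 := sq_le_sq.2 h
  rw [crossSymbol_sq, ← mul_div_assoc, le_div_iff₀ (by positivity)]
  nlinarith [mul_le_mul_of_nonneg_left hkv (sq_nonneg k)]

lemma crossSymbol_rpow_half (k v : ℝ) : crossSymbol k v ^ (1 / 2 : ℝ) =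
    |k| ^ (1 / 2 : ℝ) * |v| ^ (1 / 2 : ℝ) * (k ^ 2 + v ^ 2) ^ (-1 / 4 : ℝ) := by
  rw [crossSymbol, Real.div_rpow (by positivity) (by positivity),
    Real.mul_rpow (abs_nonneg k) (abs_nonneg v), Real.sqrt_eq_rpow,
    ← Real.rpow_mul (by positivity), div_eq_mul_inv, ← Real.rpow_neg (by positivity)]
  norm_num

lemma rpow_one_sub_mul_rpow_mul_rpow {θ a b : ℝ} (ha : 0 < a) (hb : 0 < b) (hθ : 0 ≤ θ)
    (hθ' : θ ≤ 1) (w : ℝ≥0∞) :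
    ENNReal.ofReal (a ^ (θ - 1) * b ^ (-θ)) *
      ((ENNReal.ofReal a * w) ^ (1 - θ) * (ENNReal.ofReal b * w) ^ θ) = w := by
  have hcancel : a ^ (θ - 1) * b ^ (-θ) * (a ^ (1 - θ) * b ^ θ) = 1 := by
    rw [← neg_sub 1 θ, Real.rpow_neg ha.le, Real.rpow_neg hb.le]
    field_simp
  calc _ = ENNReal.ofReal (a ^ (θ - 1) * b ^ (-θ) * (a ^ (1 - θ) * b ^ θ)) *
        (w ^ (1 - θ) * w ^ θ) := by
        rw [ENNReal.mul_rpow_of_nonneg _ _ (sub_nonneg.2 hθ'), ENNReal.mul_rpow_of_nonneg _ _ hθ,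
          ENNReal.ofReal_rpow_of_pos ha, ENNReal.ofReal_rpow_of_pos hb,
          ENNReal.ofReal_mul (by positivity : 0 ≤ a ^ (θ - 1) * b ^ (-θ)),
          ENNReal.ofReal_mul (by positivity : 0 ≤ a ^ (1 - θ))]
        ring
    _ = w := by
        rw [hcancel, ← ENNReal.rpow_add_of_nonneg _ _ (sub_nonneg.2 hθ') hθ]
        simp

lemma setLIntegral_ball_interpolation_kernel {θ : ℝ} (hθ : 0 < θ) {r : ℝ} (hr : 0 < r) (c : ℝ) :
    ∫⁻ x in Metric.ball c r, ENNReal.ofReal (|x - c| ^ (θ - 1) * r ^ (-θ)) =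
      ENNReal.ofReal (2 / θ) := by
  have hcancel : 2 * r ^ θ / θ * r ^ (-θ) = 2 / θ := by
    rw [Real.rpow_neg hr.le]
    field_simp
  simp_rw [ENNReal.ofReal_mul (Real.rpow_nonneg (abs_nonneg _) _)]
  rw [lintegral_mul_const _ (by fun_prop), setLIntegral_ball_abs_sub_rpow hθ c hr.le,
    ← ENNReal.ofReal_mul (by positivity), hcancel]

lemma sq_setLIntegral_ball_mul_rpow_half_le {θ : ℝ} (hθ : 0 < θ) (hθ' : θ ≤ 1 / 2) (k c : ℝ)
    {g w : ℝ → ℝ≥0∞} (hg : Measurable g) (hw : Measurable w) :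
    (∫⁻ x in Metric.ball c |k|, (g x * w x) ^ (1 / 2 : ℝ)) ^ 2 ≤ ENNReal.ofReal (1 / θ) *
      ((∫⁻ x, g x ^ 2) ^ (1 / 2 : ℝ) * (∫⁻ x, (‖x - c‖ₑ * w x) ^ 2) ^ (1 / 2 - θ) *
        (∫⁻ x, (‖k‖ₑ * w x) ^ 2) ^ θ) := by
  rcases eq_or_ne k 0 with rfl | hk
  · simp
  have hk' : 0 < |k| := abs_pos.2 hk
  set R : ℝ → ℝ≥0∞ := fun x => ENNReal.ofReal (|x - c| ^ (2 * θ - 1) * |k| ^ (-(2 * θ))) with hR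
  set P : ℝ → ℝ≥0∞ := fun x =>
    (g x ^ 2) ^ (1 / 2 : ℝ) * ((‖x - c‖ₑ * w x) ^ 2) ^ (1 / 2 - θ) * ((‖k‖ₑ * w x) ^ 2) ^ θ with hP
  have factor : ∀ᵐ x ∂volume.restrict (Metric.ball c |k|),
      ((g x * w x) ^ (1 / 2 : ℝ)) ^ 2 ≤ R x * P x := by
    filter_upwards [Measure.ae_ne _ c] with x hx
    have hxc : 0 < |x - c| := abs_pos.2 (sub_ne_zero.2 hx)
    refine le_of_eq ?_
    calc ((g x * w x) ^ (1 / 2 : ℝ)) ^ 2 = g x * w x := by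
          rw [← ENNReal.rpow_mul_natCast]; norm_num
      _ = g x * (R x * ((‖x - c‖ₑ * w x) ^ (1 - 2 * θ) * (‖k‖ₑ * w x) ^ (2 * θ))) := by
          rw [hR, Real.enorm_eq_ofReal_abs, Real.enorm_eq_ofReal_abs,
            rpow_one_sub_mul_rpow_mul_rpow hxc hk' (by linarith) (by linarith)]
      _ = R x * P x := by
          simp only [hP, ← ENNReal.rpow_natCast_mul]
          norm_num [mul_sub]
          ring
  have mass : ∫⁻ x in Metric.ball c |k|, R x = ENNReal.ofReal (1 / θ) := by
    rw [setLIntegral_ball_interpolation_kernel (by linarith) hk',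
      show 2 / (2 * θ) = 1 / θ by field_simp]
  calc _ ≤ (∫⁻ x in Metric.ball c |k|, R x) * ∫⁻ x in Metric.ball c |k|, P x :=
        sq_lintegral_le_lintegral_mul_lintegral (by fun_prop) (by fun_prop) factor
    _ ≤ ENNReal.ofReal (1 / θ) * ∫⁻ x, P x := by
        rw [mass]
        gcongr
        exact Measure.restrict_le_self
    _ ≤ _ := by
        gcongr
        exact lintegral_mul_mul_rpow_le (by fun_prop) (by fun_prop) (by fun_prop) (by norm_num)
          (by linarith) hθ.le (by ring)

lemma sq_mul_setLIntegral_compl_ball_sq_le (k c : ℝ) {w : ℝ → ℝ≥0∞} (hw : Measurable w) :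
    ‖k‖ₑ ^ 2 * ∫⁻ x in (Metric.ball c |k|)ᶜ, w x ^ 2 ≤
      2 * ∫⁻ x, (ENNReal.ofReal (crossSymbol k (x - c)) * w x) ^ 2 := by
  rw [← lintegral_const_mul _ (by fun_prop), ← lintegral_const_mul _ (by fun_prop)]
  refine (setLIntegral_mono' Metric.isOpen_ball.measurableSet.compl fun x hx => ?_).trans
    (setLIntegral_le_lintegral _ _)
  have hkx : |k| ≤ |x - c| := by simpa [Real.dist_eq] using hx
  rw [mul_pow, ← mul_assoc, Real.enorm_eq_ofReal_abs, ← ENNReal.ofReal_pow (abs_nonneg k),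
    sq_abs, ← ENNReal.ofReal_pow (crossSymbol_nonneg _ _), ← ENNReal.ofReal_ofNat,
    ← ENNReal.ofReal_mul zero_le_two]
  gcongr
  exact sq_le_two_mul_crossSymbol_sq hkx

lemma sq_setLIntegral_compl_ball_crossSymbol_le (k c : ℝ) {w : ℝ → ℝ≥0∞} (hw : Measurable w) :
    (∫⁻ x in (Metric.ball c |k|)ᶜ, ENNReal.ofReal (crossSymbol k (x - c)) ^ (1 / 2 : ℝ) * w x) ^ 2
      ≤ ENNReal.ofReal (2 * √2 * π) *
        ((∫⁻ x, (ENNReal.ofReal (crossSymbol k (x - c)) * w x) ^ 2) ^ (1 / 2 : ℝ) *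
          (∫⁻ x, (‖x - c‖ₑ * w x) ^ 2) ^ (1 / 2 : ℝ)) := by
  set s := (Metric.ball c |k|)ᶜ
  set ρ : ℝ → ℝ≥0∞ := fun x => ENNReal.ofReal (crossSymbol k (x - c))
  have ρ_le (x : ℝ) : ρ x ≤ ‖k‖ₑ := by
    rw [Real.enorm_eq_ofReal_abs]
    exact ENNReal.ofReal_le_ofReal (crossSymbol_le_abs_left _ _)
  have hroot : (‖k‖ₑ ^ (1 / 2 : ℝ)) ^ 2 = (‖k‖ₑ ^ 2) ^ (1 / 2 : ℝ) := by
    rw [← ENNReal.rpow_mul_natCast, ← ENNReal.rpow_natCast_mul, mul_comm]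
  have sq_le_rho : ‖k‖ₑ ^ 2 * ∫⁻ x in s, w x ^ 2 ≤ 2 * ∫⁻ x, (ρ x * w x) ^ 2 :=
    sq_mul_setLIntegral_compl_ball_sq_le k c hw
  calc (∫⁻ x in s, ρ x ^ (1 / 2 : ℝ) * w x) ^ 2
      ≤ (∫⁻ x in s, ‖k‖ₑ ^ (1 / 2 : ℝ) * w x) ^ 2 := by
        gcongr with x
        exact ρ_le x
    _ = (‖k‖ₑ ^ 2) ^ (1 / 2 : ℝ) * (∫⁻ x in s, w x) ^ 2 := by
        rw [lintegral_const_mul _ hw, mul_pow, hroot]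
    _ ≤ (‖k‖ₑ ^ 2) ^ (1 / 2 : ℝ) * (ENNReal.ofReal (2 * π) *
        ((∫⁻ x in s, w x ^ 2) ^ (1 / 2 : ℝ) *
          (∫⁻ x, (‖x - c‖ₑ * w x) ^ 2) ^ (1 / 2 : ℝ))) := by
        grw [carlson_sq_setLIntegral_le hw s c,
          setLIntegral_le_lintegral s fun x => (‖x - c‖ₑ * w x) ^ 2]
    _ = ENNReal.ofReal (2 * π) * ((‖k‖ₑ ^ 2 * ∫⁻ x in s, w x ^ 2) ^ (1 / 2 : ℝ) *
          (∫⁻ x, (‖x - c‖ₑ * w x) ^ 2) ^ (1 / 2 : ℝ)) := by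
        rw [ENNReal.mul_rpow_of_nonneg _ _ (by norm_num)]
        ring
    _ ≤ ENNReal.ofReal (2 * π) * ((2 * ∫⁻ x, (ρ x * w x) ^ 2) ^ (1 / 2 : ℝ) *
          (∫⁻ x, (‖x - c‖ₑ * w x) ^ 2) ^ (1 / 2 : ℝ)) := by
        gcongr
    _ = _ := by
        rw [ENNReal.mul_rpow_of_nonneg _ _ (by norm_num), ← ENNReal.ofReal_ofNat,
          ENNReal.ofReal_rpow_of_pos two_pos, ← Real.sqrt_eq_rpow, mul_right_comm 2,
          ENNReal.ofReal_mul (by positivity : 0 ≤ 2 * π)]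
        ring

theorem sq_lintegral_crossSymbol_rpow_half_le {θ : ℝ} (hθ : 0 < θ) (hθ' : θ ≤ 1 / 2) (k c : ℝ)
    {w : ℝ → ℝ≥0∞} (hw : Measurable w) :
    (∫⁻ x, ENNReal.ofReal (crossSymbol k (x - c)) ^ (1 / 2 : ℝ) * w x) ^ 2 ≤
      ENNReal.ofReal (4 * √2 * π + 2 / θ) *
        ((∫⁻ x, (ENNReal.ofReal (crossSymbol k (x - c)) * w x) ^ 2) ^ (1 / 2 : ℝ) *
            (∫⁻ x, (‖x - c‖ₑ * w x) ^ 2) ^ (1 / 2 : ℝ) +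
          (∫⁻ x, (ENNReal.ofReal (crossSymbol k (x - c)) * w x) ^ 2) ^ (1 / 2 : ℝ) *
            (∫⁻ x, (‖x - c‖ₑ * w x) ^ 2) ^ (1 / 2 - θ) * (∫⁻ x, (‖k‖ₑ * w x) ^ 2) ^ θ) := by
  set ρ : ℝ → ℝ≥0∞ := fun x => ENNReal.ofReal (crossSymbol k (x - c))
  have hρ : Measurable ρ := by fun_prop
  have hroot (x : ℝ) : ρ x ^ (1 / 2 : ℝ) * w x = ((ρ x * w x) * w x) ^ (1 / 2 : ℝ) := by
    rw [mul_assoc, ENNReal.mul_rpow_of_nonneg _ _ (by norm_num), ← sq, ← ENNReal.rpow_natCast_mul]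
    norm_num
  have low := sq_setLIntegral_ball_mul_rpow_half_le (g := fun x => ρ x * w x) hθ hθ' k c
    (by fun_prop) hw
  simp_rw [← hroot] at low
  have high := sq_setLIntegral_compl_ball_crossSymbol_le k c hw
  rw [← lintegral_add_compl _ (Metric.isOpen_ball (x := c) (ε := |k|)).measurableSet]
  have add_sq (a b : ℝ≥0∞) : (a + b) ^ 2 ≤ 2 * (a ^ 2 + b ^ 2) := by
    have := ENNReal.rpow_add_le_mul_rpow_add_rpow a b one_le_two
    norm_num at this
    exact this
  grw [add_sq, low, high, mul_add, ← mul_assoc 2, ← mul_assoc 2, mul_add, add_comm]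
  rw [← ENNReal.ofReal_ofNat, ← ENNReal.ofReal_mul zero_le_two, ← ENNReal.ofReal_mul zero_le_two]
  gcongr
  · linarith [show 0 < 2 / θ by positivity]
  · have : 0 < √2 * π := by positivity
    linarith [show 2 * (1 / θ) = 2 / θ by ring]

theorem lintegral_sq_lintegral_crossSymbol_rpow_half_le {α : Type*} [MeasurableSpace α]
    {ν : Measure α} {κ c : α → ℝ} (hκ : Measurable κ) (hc : Measurable c)
    {W : α × ℝ → ℝ≥0∞} (hW : Measurable W) {θ : ℝ} (hθ : 0 < θ) (hθ' : θ ≤ 1 / 2) :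
    ∫⁻ a, (∫⁻ x, ENNReal.ofReal (crossSymbol (κ a) (x - c a)) ^ (1 / 2 : ℝ) * W (a, x)) ^ 2 ∂ν ≤
      ENNReal.ofReal (4 * √2 * π + 2 / θ) *
        ((∫⁻ a, (∫⁻ x, (ENNReal.ofReal (crossSymbol (κ a) (x - c a)) * W (a, x)) ^ 2) ∂ν)
              ^ (1 / 2 : ℝ) *
            (∫⁻ a, (∫⁻ x, (‖x - c a‖ₑ * W (a, x)) ^ 2) ∂ν) ^ (1 / 2 : ℝ) +
          (∫⁻ a, (∫⁻ x, (ENNReal.ofReal (crossSymbol (κ a) (x - c a)) * W (a, x)) ^ 2) ∂ν)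
              ^ (1 / 2 : ℝ) *
            (∫⁻ a, (∫⁻ x, (‖x - c a‖ₑ * W (a, x)) ^ 2) ∂ν) ^ (1 / 2 - θ) *
            (∫⁻ a, (∫⁻ x, (‖κ a‖ₑ * W (a, x)) ^ 2) ∂ν) ^ θ) := by
  set G : α → ℝ≥0∞ := fun a =>
    ∫⁻ x, (ENNReal.ofReal (crossSymbol (κ a) (x - c a)) * W (a, x)) ^ 2
  set H : α → ℝ≥0∞ := fun a => ∫⁻ x, (‖x - c a‖ₑ * W (a, x)) ^ 2
  set K : α → ℝ≥0∞ := fun a => ∫⁻ x, (‖κ a‖ₑ * W (a, x)) ^ 2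
  have hG : Measurable G := Measurable.lintegral_prod_right (by fun_prop)
  have hH : Measurable H := Measurable.lintegral_prod_right (by fun_prop)
  have hK : Measurable K := Measurable.lintegral_prod_right (by fun_prop)
  calc _ ≤ ∫⁻ a, ENNReal.ofReal (4 * √2 * π + 2 / θ) * (G a ^ (1 / 2 : ℝ) * H a ^ (1 / 2 : ℝ) +
        G a ^ (1 / 2 : ℝ) * H a ^ (1 / 2 - θ) * K a ^ θ) ∂ν :=
        lintegral_mono fun a =>
          sq_lintegral_crossSymbol_rpow_half_le hθ hθ' (κ a) (c a) (by fun_prop)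
    _ = ENNReal.ofReal (4 * √2 * π + 2 / θ) * (∫⁻ a, G a ^ (1 / 2 : ℝ) * H a ^ (1 / 2 : ℝ) ∂ν +
        ∫⁻ a, G a ^ (1 / 2 : ℝ) * H a ^ (1 / 2 - θ) * K a ^ θ ∂ν) := by
        rw [lintegral_const_mul _ (by fun_prop), lintegral_add_left (by fun_prop)]
    _ ≤ _ := by
        gcongr
        · exact ENNReal.lintegral_mul_norm_pow_le hG.aemeasurable hH.aemeasurable (by norm_num)
            (by norm_num) (by norm_num)
        · exact lintegral_mul_mul_rpow_le hG.aemeasurable hH.aemeasurable hK.aemeasurable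
            (by norm_num) (by linarith) hθ.le (by ring)

lemma jap_pos (k : ℝ) : 0 < jap k := by
  unfold jap
  positivity

@[fun_prop]
lemma measurable_jap : Measurable jap := by
  unfold jap
  fun_prop

lemma jap_rpow_two_mul (k m : ℝ) : jap k ^ (2 * m) = (jap k ^ m) ^ 2 := by
  rw [mul_comm, Real.rpow_mul (jap_pos k).le, Real.rpow_two]

lemma Aw_nonneg {μ : ℝ} (hμ : 0 ≤ μ) (k : ℝ) : 0 ≤ Aw μ k := by
  unfold Aw
  positivity

lemma Aw_le_one {μ : ℝ} (hμ : 0 < μ) (k : ℝ) : Aw μ k ≤ 1 := by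
  unfold Aw
  split_ifs with hk
  · exact le_rfl
  · have hk' : μ ≤ |k| := not_lt.1 hk
    have hk0 : 0 < |k| := hμ.trans_le hk'
    rw [neg_div, Real.rpow_neg hk0.le, ← div_eq_mul_inv, ← Real.div_rpow hμ.le hk0.le]
    exact Real.rpow_le_one (by positivity) ((div_le_one hk0).2 hk') (by norm_num)

@[fun_prop]
lemma measurable_Aw (μ : ℝ) : Measurable (Aw μ) :=
  Measurable.ite (measurableSet_lt (by fun_prop) (by fun_prop)) measurable_const (by fun_prop)

/-- The profile `⟨k⟩ᵐ A(k) |Z|`: the mixed norm and `D_{τα}` are weighted norms of it, and `E`, `D_γ`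
dominate such norms. -/
def profile (m μ : ℝ) (Z : ℝ × ℝ → ℂ) (x : ℝ × ℝ) : ℝ≥0∞ :=
  ENNReal.ofReal (jap x.1 ^ m * Aw μ x.1) * ‖Z x‖ₑ

lemma measurable_profile (m μ : ℝ) {Z : ℝ × ℝ → ℂ} (hZ : Measurable Z) :
    Measurable (profile m μ Z) := by
  unfold profile
  fun_prop

lemma jap_rpow_mul_Aw_nonneg {μ : ℝ} (hμ : 0 ≤ μ) (m k : ℝ) : 0 ≤ jap k ^ m * Aw μ k :=
  mul_nonneg (Real.rpow_nonneg (jap_pos k).le m) (Aw_nonneg hμ k)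

lemma L2L1n_eq_lintegral_profile (t m μ : ℝ) (Z : ℝ × ℝ → ℂ) :
    L2L1n (fun k η => jap k ^ m * Aw μ k * |k| ^ ((1 : ℝ) / 2) * |η - k * t| ^ ((1 : ℝ) / 2)
        * pw t k η ^ (-(1 : ℝ) / 4)) Z =
      (∫⁻ k, (∫⁻ η, ENNReal.ofReal (crossSymbol k (η - k * t)) ^ (1 / 2 : ℝ) *
        profile m μ Z (k, η)) ^ 2) ^ (1 / 2 : ℝ) := by
  have weight (k η : ℝ) : ENNReal.ofReal (jap k ^ m * Aw μ k * |k| ^ (1 / 2 : ℝ) *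
        |η - k * t| ^ (1 / 2 : ℝ) * pw t k η ^ (-1 / 4 : ℝ)) =
      ENNReal.ofReal (crossSymbol k (η - k * t)) ^ (1 / 2 : ℝ) *
        ENNReal.ofReal (jap k ^ m * Aw μ k) := by
    rw [ENNReal.ofReal_rpow_of_nonneg (crossSymbol_nonneg _ _) (by norm_num),
      crossSymbol_rpow_half, ← ENNReal.ofReal_mul (by positivity), pw]
    ring_nf
  simp only [L2L1n, profile, weight, ← mul_assoc, enorm_eq_nnnorm]

lemma Dta_eq_lintegral_profile {μ : ℝ} (hμ : 0 ≤ μ) (t m : ℝ) (Z : ℝ × ℝ → ℂ) :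
    Dta t μ m Z = ∫⁻ k, ∫⁻ η,
      (ENNReal.ofReal (crossSymbol k (η - k * t)) * profile m μ Z (k, η)) ^ 2 := by
  have weight (k η : ℝ) : ENNReal.ofReal (jap k ^ (2 * m) * Aw μ k ^ 2 * k ^ 2 *
        (η - k * t) ^ 2 / pw t k η) =
      (ENNReal.ofReal (crossSymbol k (η - k * t)) * ENNReal.ofReal (jap k ^ m * Aw μ k)) ^ 2 := by
    rw [← ENNReal.ofReal_mul (crossSymbol_nonneg _ _),
      ← ENNReal.ofReal_pow (mul_nonneg (crossSymbol_nonneg _ _) (jap_rpow_mul_Aw_nonneg hμ m k)),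
      mul_pow, crossSymbol_sq, jap_rpow_two_mul, pw]
    ring_nf
  simp only [Dta, profile, weight, ← mul_assoc, mul_pow, enorm_eq_nnnorm]

lemma lintegral_sq_sub_mul_profile_le (t m μ : ℝ) (Z : ℝ × ℝ → ℂ) :
    ∫⁻ k, ∫⁻ η, (‖η - k * t‖ₑ * profile m μ Z (k, η)) ^ 2 ≤ En t μ m Z ^ 2 := by
  have weight (k η : ℝ) : ENNReal.ofReal (jap k ^ m * Aw μ k * |η - k * t|) =
      ‖η - k * t‖ₑ * ENNReal.ofReal (jap k ^ m * Aw μ k) := by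
    rw [ENNReal.ofReal_mul' (abs_nonneg _), Real.enorm_eq_ofReal_abs, mul_comm]
  calc _ = L2n (fun k η => jap k ^ m * Aw μ k * |η - k * t|) Z ^ 2 := by
        simp only [L2n, weight, profile, ← mul_assoc, enorm_eq_nnnorm]
        rw [← ENNReal.rpow_mul_natCast]
        norm_num
    _ ≤ En t μ m Z ^ 2 := by
        gcongr
        exact le_add_self

lemma mul_lintegral_sq_mul_profile_le {μ : ℝ} (hμ : 0 < μ) (t m : ℝ) (Z : ℝ × ℝ → ℂ) :
    ENNReal.ofReal μ * ∫⁻ k, ∫⁻ η, (‖k‖ₑ * profile m μ Z (k, η)) ^ 2 ≤ Dg t μ m Z := by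
  unfold Dg profile
  gcongr with k η
  have hA : (jap k ^ m * Aw μ k) ^ 2 ≤ jap k ^ (2 * m) := by
    rw [jap_rpow_two_mul, mul_pow]
    exact mul_le_of_le_one_right (sq_nonneg _)
      (pow_le_one₀ (Aw_nonneg hμ.le k) (Aw_le_one hμ k))
  have hp : |k| ^ 2 ≤ pw t k η := by
    rw [sq_abs, pw]
    exact le_add_of_nonneg_right (sq_nonneg _)
  rw [← mul_assoc, mul_pow, Real.enorm_eq_ofReal_abs, ← ENNReal.ofReal_mul (abs_nonneg k),
    ← ENNReal.ofReal_pow (mul_nonneg (abs_nonneg k) (jap_rpow_mul_Aw_nonneg hμ.le m k)), mul_pow,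
    mul_comm (|k| ^ 2)]
  gcongr
  · exact Real.rpow_nonneg (jap_pos k).le _
  · rfl

lemma lintegral_sq_sub_mul_profile_rpow_le (t m μ : ℝ) (Z : ℝ × ℝ → ℂ) {a : ℝ} (ha : 0 ≤ a) :
    (∫⁻ k, ∫⁻ η, (‖η - k * t‖ₑ * profile m μ Z (k, η)) ^ 2) ^ a ≤ En t μ m Z ^ (2 * a) := by
  grw [lintegral_sq_sub_mul_profile_le t m μ Z, ← ENNReal.rpow_natCast_mul]
  rfl

lemma lintegral_sq_mul_profile_rpow_le {μ : ℝ} (hμ : 0 < μ) (t m : ℝ) (Z : ℝ × ℝ → ℂ) {δ : ℝ}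
    (hδ : 0 ≤ δ) :
    (∫⁻ k, ∫⁻ η, (‖k‖ₑ * profile m μ Z (k, η)) ^ 2) ^ δ ≤
      ENNReal.ofReal (μ ^ (-δ)) * Dg t μ m Z ^ δ := by
  grw [← mul_lintegral_sq_mul_profile_le hμ t m Z]
  rw [ENNReal.mul_rpow_of_nonneg _ _ hδ, ENNReal.ofReal_rpow_of_pos hμ, ← mul_assoc,
    ← ENNReal.ofReal_mul (by positivity), ← Real.rpow_add hμ]
  simp

lemma rpow_half_interpolation_le (G H K : ℝ≥0∞) (δ : ℝ) :
    (G ^ (1 / 2 : ℝ) * H ^ (1 / 2 : ℝ) +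
        G ^ (1 / 2 : ℝ) * H ^ (1 / 2 - 2 * δ) * K ^ (2 * δ)) ^ (1 / 2 : ℝ) ≤
      G ^ (1 / 4 : ℝ) * H ^ (1 / 4 : ℝ) + G ^ (1 / 4 : ℝ) * H ^ (1 / 4 - δ) * K ^ δ := by
  refine (ENNReal.rpow_add_le_add_rpow _ _ (by norm_num) (by norm_num)).trans_eq ?_
  have half_nonneg : (0 : ℝ) ≤ 1 / 2 := by norm_num
  simp only [ENNReal.mul_rpow_of_nonneg _ _ half_nonneg, ← ENNReal.rpow_mul]
  ring_nf

theorem stmt19_general {δ : ℝ} (hδ : δ ∈ Set.Ioc (0 : ℝ) (1 / 4)) :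
    ∃ C : ℝ, 0 < C ∧
      ∀ m t μ : ℝ, 0 < μ →
        ∀ Z : ℝ × ℝ → ℂ, Measurable Z →
          L2L1n (fun k η =>
              jap k ^ m * Aw μ k * |k| ^ ((1 : ℝ) / 2) * |η - k * t| ^ ((1 : ℝ) / 2)
                * pw t k η ^ (-(1 : ℝ) / 4)) Z
            ≤ ENNReal.ofReal C *
                (Dta t μ m Z ^ ((1 : ℝ) / 4) * En t μ m Z ^ ((1 : ℝ) / 2)
                  + ENNReal.ofReal (μ ^ (-δ)) * Dg t μ m Z ^ δ * Dta t μ m Z ^ ((1 : ℝ) / 4)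
                      * En t μ m Z ^ ((1 : ℝ) / 2 - 2 * δ)) := by
  obtain ⟨hδ₀, hδ₁⟩ := hδ
  refine ⟨(4 * √2 * π + 2 / (2 * δ)) ^ (1 / 2 : ℝ), by positivity, fun m t μ hμ Z hZ => ?_⟩
  have mixed := lintegral_sq_lintegral_crossSymbol_rpow_half_le (ν := volume) (κ := fun k => k)
    (c := fun k => k * t) (by fun_prop) (by fun_prop) (measurable_profile m μ hZ)
    (θ := 2 * δ) (by linarith) (by linarith)
  rw [← Dta_eq_lintegral_profile hμ.le] at mixed
  rw [L2L1n_eq_lintegral_profile, ← ENNReal.ofReal_rpow_of_pos (by positivity)]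
  grw [mixed]
  rw [ENNReal.mul_rpow_of_nonneg _ _ (by norm_num)]
  grw [rpow_half_interpolation_le,
    lintegral_sq_sub_mul_profile_rpow_le t m μ Z (by norm_num : (0 : ℝ) ≤ 1 / 4),
    lintegral_sq_sub_mul_profile_rpow_le t m μ Z (by linarith : 0 ≤ 1 / 4 - δ),
    lintegral_sq_mul_profile_rpow_le hμ t m Z hδ₀.le]
  ring_nf
  rfl

/-- `D_{τα}`/energy interpolation lemma: there is `C = C(m,δ)`
such that for all `t`, `μ ∈ (0,1)` and measurable `Z`,
`‖⟨k⟩^m A(k)|k|^{1/2}|η−kt|^{1/2} p^{−1/4} Z‖_{L²_kL¹_η}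
  ≤ C(D_{τα}^{1/4}E^{1/2} + μ^{−δ}D_γ^δ D_{τα}^{1/4}E^{1/2−2δ})`. -/
theorem stmt19 (m δ : ℝ) (hm : 0 < m) (hδ : δ ∈ Set.Ioo (0 : ℝ) (1 / 12)) :
    ∃ C : ℝ, 0 < C ∧
      ∀ (t μ : ℝ), μ ∈ Set.Ioo (0 : ℝ) 1 →
        ∀ Z : ℝ × ℝ → ℂ, Measurable Z →
          L2L1n (fun k η =>
              jap k ^ m * Aw μ k * |k| ^ ((1 : ℝ) / 2) * |η - k * t| ^ ((1 : ℝ) / 2)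
                * pw t k η ^ (-(1 : ℝ) / 4)) Z
            ≤ ENNReal.ofReal C *
                (Dta t μ m Z ^ ((1 : ℝ) / 4) * En t μ m Z ^ ((1 : ℝ) / 2)
                  + ENNReal.ofReal (μ ^ (-δ)) * Dg t μ m Z ^ δ * Dta t μ m Z ^ ((1 : ℝ) / 4)
                      * En t μ m Z ^ ((1 : ℝ) / 2 - 2 * δ)) := by
  obtain ⟨C, hC, h⟩ := stmt19_general ⟨hδ.1, by linarith [hδ.2]⟩
  exact ⟨C, hC, fun t μ hμ => h m t μ hμ.1⟩
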